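/- arXiv:1806.00382 — 2 statements merged into one kernel-verified Lean document; each statement's English description precedes it below -/
import Mathlib

section
/- Let 1 ≤ p < ∞ and w ∈ 𝒲. The formal identity j_g : ℓ_p → g(w,p) is finitely strictly singular. Concretely: for every ε > 0 there exists N ∈ ℕ such that every N-dimensional linear subspace F of ℓ_p (real scalars) contains a vector x with ‖x‖_{ℓ_p} = 1 and ‖x‖_{g(w,p)} ≤ ε. -/
/-!
Unit vectors of `ℓ_p` that are uniformly small in the sup norm are small in the Garling norm:
the first `K` terms of `∑ |x_{n_k}|^p w_k` contribute at most `K δ^p`, and the remaining ones at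
most `sup_{k ≥ K} w_k` (`garlingNorm_le_of_sup_le`). It therefore suffices that every subspace of
`ℓ_p` of large dimension contains a norm-one vector with all coordinates at most `δ`
(`exists_flat_vector`), i.e. that `ℓ_p → c_0` is finitely strictly singular.

The latter is Milman's extreme point argument. If it fails for `F`, then the sup norm dominates
the `ℓ_p` norm on `F`, so the sup-norm unit ball `B` of `F` is compact and has an extreme point
`x`. Since `‖x‖ ≤ 1 / δ`, at most `(2 / δ)^p` coordinates of `x` have modulus `≥ 1/2`. If `dim F` is
larger than that, some nonzero `y ∈ F` vanishes at these coordinates, and after scaling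
`x ± y ∈ B`, contradicting extremality.
-/

/-- The Garling norm `‖x‖_{g(w,p)} = sup (∑_k |x_{n_k}|^p w_k)^{1/p}` of a real sequence
`x`, the supremum taken over all strictly increasing sequences `n_1 < n_2 < ⋯` of indices
(strictly monotone maps `f : ℕ → ℕ`; everything `0`-indexed). -/
noncomputable def garlingNorm (w : ℕ → ℝ) (p : ℝ) (x : ℕ → ℝ) : ℝ :=
  ⨆ f : {f : ℕ → ℕ // StrictMono f}, (∑' k : ℕ, |x (f.1 k)| ^ p * w k) ^ (1 / p)

lemma garlingNorm_le_of_sup_le (p : ℝ) (hp : 1 ≤ p) [Fact (1 ≤ ENNReal.ofReal p)]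
    (w : ℕ → ℝ) (hw_pos : ∀ i, 0 < w i) (hw_one : ∀ i, w i ≤ 1)
    (x : lp (fun _ : ℕ => ℝ) (ENNReal.ofReal p)) (hx : ‖x‖ = 1)
    (K : ℕ) (δ η ε : ℝ) (hε : 0 < ε)
    (hη : 0 ≤ η) (hw : ∀ k, K ≤ k → w k ≤ η) (hsup : ∀ i, |x i| ≤ δ)
    (hle : K * δ ^ p + η ≤ ε ^ p) :
    garlingNorm w p (fun i => x i) ≤ ε := by
  have hp0 : 0 < p := by linarith
  have htr : (ENNReal.ofReal p).toReal = p := ENNReal.toReal_ofReal hp0.le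
  have hpos : 0 < (ENNReal.ofReal p).toReal := by rw [htr]; exact hp0
  have hsx : Summable fun i => |x i| ^ p := by
    have := (lp.memℓp x).summable hpos
    simpa only [htr, Real.norm_eq_abs] using this
  have hsum : ∑' i, |x i| ^ p = 1 := by
    have := lp.norm_rpow_eq_tsum hpos x
    simp only [htr, Real.norm_eq_abs, hx, Real.one_rpow] at this
    exact this.symm
  have : Nonempty {f : ℕ → ℕ // StrictMono f} := ⟨⟨id, strictMono_id⟩⟩
  refine ciSup_le fun ⟨f, hf⟩ => ?_
  have hsf : Summable fun k => |x (f k)| ^ p := hsx.comp_injective hf.injective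
  have hsf1 : ∑' k, |x (f k)| ^ p ≤ 1 := by
    rw [← hsum]
    exact tsum_comp_le_tsum_of_inj hsx (fun i => by positivity) hf.injective
  have hind : HasSum (fun k => if k ∈ Finset.range K then δ ^ p else 0) (K * δ ^ p) := by
    have := hasSum_sum_of_ne_finset_zero (L := SummationFilter.unconditional ℕ)
      (f := fun k => if k ∈ Finset.range K then δ ^ p else 0) (s := Finset.range K)
      (fun b hb => if_neg hb)
    rwa [Finset.sum_congr rfl (fun k hk => if_pos hk), Finset.sum_const, Finset.card_range,
      nsmul_eq_mul] at this
  have hterm : ∀ k, |x (f k)| ^ p * w k ≤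
      (if k ∈ Finset.range K then δ ^ p else 0) + η * |x (f k)| ^ p := by
    intro k
    have h0 : 0 ≤ |x (f k)| ^ p := by positivity
    split_ifs with hk
    · have h1 : |x (f k)| ^ p ≤ δ ^ p :=
        Real.rpow_le_rpow (abs_nonneg _) (hsup _) hp0.le
      have h2 := mul_le_of_le_one_right h0 (hw_one k)
      have h3 := mul_nonneg hη h0
      linarith
    · have h1 := hw k (by simpa using hk)
      have := mul_le_mul_of_nonneg_left h1 h0
      linarith
  have hS : Summable fun k => |x (f k)| ^ p * w k :=
    Summable.of_nonneg_of_le (fun k => mul_nonneg (by positivity) (hw_pos k).le)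
      (fun k => mul_le_of_le_one_right (by positivity) (hw_one k)) hsf
  have hbound : ∑' k, |x (f k)| ^ p * w k ≤ ε ^ p := by
    calc ∑' k, |x (f k)| ^ p * w k
        ≤ K * δ ^ p + η * ∑' k, |x (f k)| ^ p :=
          hasSum_le hterm hS.hasSum (hind.add (hsf.hasSum.mul_left η))
      _ ≤ K * δ ^ p + η := by
          have := mul_le_of_le_one_right hη hsf1
          linarith
      _ ≤ ε ^ p := hle
  calc (∑' k, |x (f k)| ^ p * w k) ^ (1 / p) ≤ (ε ^ p) ^ (1 / p) :=
        Real.rpow_le_rpow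
          (tsum_nonneg fun k => mul_nonneg (by positivity) (hw_pos k).le) hbound (by positivity)
    _ = ε := by
        rw [← Real.rpow_mul hε.le, mul_one_div_cancel hp0.ne', Real.rpow_one]

/-- The quantitative form of the finite strict singularity of `ℓ_p → c_0`. -/
lemma exists_flat_vector (p : ℝ) (hp : 1 ≤ p) [Fact (1 ≤ ENNReal.ofReal p)]
    (δ : ℝ) (hδ : 0 < δ) (N : ℕ) (hN : (2 / δ) ^ p < N)
    (F : Subspace ℝ (lp (fun _ : ℕ => ℝ) (ENNReal.ofReal p))) (hF : Module.finrank ℝ F = N) :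
    ∃ x ∈ F, ‖x‖ = 1 ∧ ∀ i, |x i| ≤ δ := by
  have hp0 : 0 < p := by linarith
  have htr : (ENNReal.ofReal p).toReal = p := ENNReal.toReal_ofReal hp0.le
  have hpos : 0 < (ENNReal.ofReal p).toReal := by rw [htr]; exact hp0
  have hne : ENNReal.ofReal p ≠ 0 := by simpa using hp0
  have hNpos : 0 < N := by
    have : (0 : ℝ) < N := lt_of_le_of_lt (by positivity) hN
    exact_mod_cast this
  have : FiniteDimensional ℝ F := FiniteDimensional.of_finrank_pos (by omega)
  have : ProperSpace F := FiniteDimensional.proper ℝ F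
  by_contra! hcon
  let ev : ℕ → F →ₗ[ℝ] ℝ := fun i =>
    { toFun := fun x => (x : lp (fun _ : ℕ => ℝ) (ENNReal.ofReal p)) i
      map_add' := fun x y => rfl
      map_smul' := fun c x => rfl }
  have hev : ∀ i (x : F), |ev i x| ≤ ‖x‖ := fun i x => lp.norm_apply_le_norm hne x.1 i
  let B : Set F := {x | ∀ i, |ev i x| ≤ 1}
  have hBbdd : ∀ x ∈ B, ‖x‖ ≤ 1 / δ := by
    intro x hx
    by_cases h0 : x = 0
    · rw [h0, norm_zero]; positivity
    have hn : 0 < ‖x‖ := norm_pos_iff.mpr h0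
    have h1 : ‖‖x‖⁻¹ • x‖ = 1 := norm_smul_inv_norm (𝕜 := ℝ) h0
    obtain ⟨i, hi⟩ := hcon (‖x‖⁻¹ • x : F) (Submodule.coe_mem _) h1
    have h2 : δ < |ev i (‖x‖⁻¹ • x)| := hi
    rw [map_smul, smul_eq_mul, abs_mul, abs_of_pos (inv_pos.mpr hn)] at h2
    have h3 : ‖x‖⁻¹ * |ev i x| ≤ ‖x‖⁻¹ * 1 :=
      mul_le_mul_of_nonneg_left (hx i) (by positivity)
    rw [le_div_iff₀ hδ]
    have h4 : δ < ‖x‖⁻¹ := by linarith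
    have := mul_lt_mul_of_pos_left h4 hn
    rw [mul_inv_cancel₀ hn.ne'] at this
    exact this.le
  have hBcl : IsClosed B := by
    have : B = ⋂ i, {x | |ev i x| ≤ 1} := by ext x; simp [B]
    rw [this]
    exact isClosed_iInter fun i =>
      isClosed_le (LinearMap.continuous_of_finiteDimensional (ev i)).abs continuous_const
  have hBc : IsCompact B :=
    (isCompact_closedBall (0 : F) (1 / δ)).of_isClosed_subset hBcl
      fun x hx => by simpa using hBbdd x hx
  obtain ⟨x, hx⟩ := hBc.extremePoints_nonempty ⟨0, fun i => by simp⟩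
  have hxB : x ∈ B := hx.1
  -- A finset of large coordinates of `x` has fewer than `N` elements.
  have hcard : ∀ s : Finset ℕ, (∀ i ∈ s, 1 / 2 ≤ |ev i x|) → s.card < N := by
    intro s hs
    have h1 : ∑ i ∈ s, |ev i x| ^ p ≤ ‖x‖ ^ p := by
      have := lp.sum_rpow_le_norm_rpow hpos x.1 s
      simp only [htr, Real.norm_eq_abs] at this
      exact this
    have h2 : s.card * (1 / 2 : ℝ) ^ p ≤ ∑ i ∈ s, |ev i x| ^ p := by
      rw [← nsmul_eq_mul]
      exact Finset.card_nsmul_le_sum _ _ _ fun i hi =>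
        Real.rpow_le_rpow (by norm_num) (hs i hi) hp0.le
    have h3 : ‖x‖ ^ p ≤ (1 / δ) ^ p :=
      Real.rpow_le_rpow (norm_nonneg _) (hBbdd x hxB) hp0.le
    have h4 : (1 / δ : ℝ) ^ p = (2 / δ) ^ p * (1 / 2) ^ p := by
      rw [← Real.mul_rpow (by positivity) (by norm_num)]
      congr 1
      ring
    have h5 : (s.card : ℝ) * (1 / 2 : ℝ) ^ p ≤ (2 / δ) ^ p * (1 / 2) ^ p := by linarith
    have h6 := le_of_mul_le_mul_right h5 (by positivity)
    exact_mod_cast h6.trans_lt hN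
  have hfin : {i | 1 / 2 ≤ |ev i x|}.Finite := by
    by_contra hinf
    obtain ⟨s, hs, hsc⟩ := Set.Infinite.exists_subset_card_eq hinf N
    exact absurd (hcard s fun i hi => hs hi) (by omega)
  let A := hfin.toFinset
  have hA : A.card < N := hcard A fun i hi => by simpa [A] using hi
  let T : F →ₗ[ℝ] (A → ℝ) := LinearMap.pi fun i => ev i
  have hker : LinearMap.ker T ≠ ⊥ :=
    LinearMap.ker_ne_bot_of_finrank_lt (by simpa [hF] using hA)
  obtain ⟨y, hyT, hy0⟩ := Submodule.exists_mem_ne_zero_of_ne_bot hker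
  have hny : 0 < ‖y‖ := norm_pos_iff.mpr hy0
  let z : F := (1 / 2 * ‖y‖⁻¹) • y
  have hz0 : z ≠ 0 := smul_ne_zero (by positivity) hy0
  have hzn : ‖z‖ = 1 / 2 := by
    simp only [z, norm_smul, norm_mul, norm_inv, norm_norm]
    field_simp
    norm_num
  have hzA : ∀ i ∈ A, ev i z = 0 := by
    intro i hi
    have : ev i y = 0 := congrFun (LinearMap.mem_ker.mp hyT) ⟨i, hi⟩
    simp only [z, map_smul, this, smul_zero]
  have hmem : ∀ c : ℝ, |c| = 1 → x + c • z ∈ B := by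
    intro c hc i
    rw [map_add, map_smul, smul_eq_mul]
    by_cases hi : i ∈ A
    · rw [hzA i hi, mul_zero, add_zero]
      exact hxB i
    · have h1 : |ev i x| < 1 / 2 := by simpa [A] using hi
      have h2 := hev i z
      have h3 : |c * ev i z| = |ev i z| := by rw [abs_mul, hc, one_mul]
      have := abs_add_le (ev i x) (c * ev i z)
      linarith
  have hseg : x ∈ openSegment ℝ (x + (1 : ℝ) • z) (x + (-1 : ℝ) • z) :=
    ⟨1 / 2, 1 / 2, by norm_num, by norm_num, by norm_num, by module⟩
  have := hx.2 (hmem 1 (by norm_num)) (hmem (-1) (by norm_num)) hseg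
  rw [one_smul] at this
  exact hz0 (by simpa using this)

/-- Let `1 ≤ p < ∞` and `w ∈ 𝒲` (a positive, nonincreasing null weight with
`w_1 = 1`, not summable; `0`-indexed below).  The formal identity `j_g : ℓ_p → g(w,p)` is
finitely strictly singular: for every `ε > 0` there exists `N ∈ ℕ` such that every
`N`-dimensional linear subspace `F` of the real space `ℓ_p` contains a vector `x` with
`‖x‖_{ℓ_p} = 1` and `‖x‖_{g(w,p)} ≤ ε`. -/
theorem stmt_4 (p : ℝ) (hp : 1 ≤ p) [Fact (1 ≤ ENNReal.ofReal p)]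
    (w : ℕ → ℝ) (hw_pos : ∀ i, 0 < w i) (hw_one : w 0 = 1) (hw_anti : Antitone w)
    (hw_null : Filter.Tendsto w Filter.atTop (nhds 0)) (hw_nonsum : ¬ Summable w) :
    ∀ ε : ℝ, 0 < ε → ∃ N : ℕ,
      ∀ F : Subspace ℝ (lp (fun _ : ℕ => ℝ) (ENNReal.ofReal p)),
        Module.finrank ℝ F = N →
        ∃ x ∈ F, ‖x‖ = 1 ∧ garlingNorm w p (fun i => x i) ≤ ε := by
  intro ε hε
  have hp0 : 0 < p := by linarith
  have hεp : 0 < ε ^ p := Real.rpow_pos_of_pos hε p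
  obtain ⟨K, hK⟩ := Filter.eventually_atTop.mp
    (hw_null.eventually (ge_mem_nhds (half_pos hεp)))
  -- `δ` is chosen so that `K * δ ^ p ≤ ε ^ p / 2`.
  let c : ℝ := ε ^ p / 2 / (K + 1)
  have hc : 0 < c := by positivity
  let δ : ℝ := c ^ (1 / p)
  have hδ : 0 < δ := Real.rpow_pos_of_pos hc _
  have hδp : δ ^ p = c := by
    rw [← Real.rpow_mul hc.le, one_div_mul_cancel hp0.ne', Real.rpow_one]
  obtain ⟨N, hN⟩ := exists_nat_gt ((2 / δ) ^ p)
  refine ⟨N, fun F hF => ?_⟩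
  obtain ⟨x, hxF, hx1, hxs⟩ := exists_flat_vector p hp δ hδ N hN F hF
  refine ⟨x, hxF, hx1, garlingNorm_le_of_sup_le p hp w hw_pos
    (fun i => hw_one ▸ hw_anti (Nat.zero_le i)) x hx1 K δ (ε ^ p / 2) ε hε
    (half_pos hεp).le hK hxs ?_⟩
  have h1 : (K + 1 : ℝ) * c = ε ^ p / 2 := mul_div_cancel₀ _ (by positivity)
  rw [hδp]
  linarith
end

section
/- Let 1 ≤ p < ∞ and w ∈ 𝒲. Let (E_n)_{n=1}^∞ be any sequence of finite-dimensional real normed spaces and let E = (⊕_{n=1}^∞ E_n)_{ℓ_p}. Then there do not exist a constant C ≥ 1 and a sequence (z_i)_{i=1}^∞ in E such that for every finitely supported real sequence (a_i): C^{-1}·‖a‖_{d(w,p)} ≤ ‖∑_{i=1}^∞ a_i z_i‖_E ≤ C·‖a‖_{d(w,p)}. In particular, the Lorentz sequence space d(w,p) does not embed isomorphically into any ℓ_p-sum of finite-dimensional spaces. -/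
/-!
The proof is a gliding-hump argument.  Suppose `(z_i)` in `E = (⊕ E_n)_{ℓ_p}` is equivalent to the
unit vector basis of `d(w,p)`.  It is bounded and the `E_n` are finite-dimensional, so a subsequence
converges coordinatewise, and the differences `y_k = z_{φ(2k)} - z_{φ(2k+1)}` of its consecutive
terms tend to `0` coordinatewise while `‖y_k‖ ≥ C⁻¹`.  For fixed `x ∈ E`, a coordinatewise null
sequence is asymptotically disjoint from `x`, so `‖x + y_k‖ ^ p ≥ ‖x‖ ^ p + C⁻ᵖ / 2` for large `k`
(`eventually_norm_add_rpow_ge`).  Iterating, for every `N` there is a coefficient sequence `a`,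
bounded by `1` and supported on at most `2N` indices, with `‖∑ a_i z_i‖ ^ p ≥ N C⁻ᵖ / 2`.  On the
other hand `‖a‖_{d(w,p)} ^ p ≤ K + 2 N ε` whenever `w ≤ ε` from index `K` on
(`tsum_perm_le`), so it is `o(N)` because `w → 0`.  This is a contradiction.
-/

/-- The Lorentz norm `‖a‖_{d(w,p)} = sup_σ (∑_n |a_{σ(n)}|^p w_n)^{1/p}` of a (finitely
supported) real sequence `a`, the supremum taken over all permutations `σ` of `ℕ`
(everything `0`-indexed). -/
noncomputable def lorentzNorm (w : ℕ → ℝ) (p : ℝ) (a : ℕ → ℝ) : ℝ :=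
  ⨆ σ : Equiv.Perm ℕ, (∑' n : ℕ, |a (σ n)| ^ p * w n) ^ (1 / p)

open Filter Topology

/-! ### The Lorentz norm of bounded sequences with small support -/

/-- If `0 < w ≤ 1`, and `w ≤ ε` from index `K` on, then a sequence bounded by `1` and supported on
at most `m` indices has `∑ |a_{σ(n)}| ^ p w_n ≤ K + ε m`: the first `K` indices contribute at most `1` each, and
every other index of the support at most `ε`. -/
lemma tsum_perm_le {p : ℝ} (hp : 1 ≤ p) {w : ℕ → ℝ} (hw_pos : ∀ i, 0 < w i)
    (hw_le : ∀ i, w i ≤ 1) {ε : ℝ} (hε : 0 ≤ ε) {K : ℕ} (hK : ∀ n, K ≤ n → w n ≤ ε)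
    (a : ℕ →₀ ℝ) (ha : ∀ i, |a i| ≤ 1) {m : ℕ} (hm : a.support.card ≤ m)
    (σ : Equiv.Perm ℕ) : ∑' n, |a (σ n)| ^ p * w n ≤ K + ε * m := by
  have hp0 : p ≠ 0 := by linarith
  set B : Finset ℕ := a.support.map σ.symm.toEmbedding with hB
  have hBc : B.card ≤ m := by simpa [hB] using hm
  rw [tsum_eq_sum (s := B)]
  · have h1 : ∀ n ∈ B, |a (σ n)| ^ p * w n ≤ (if n < K then 1 else 0) + ε := by
      intro n _
      have h2 : |a (σ n)| ^ p ≤ 1 := Real.rpow_le_one (abs_nonneg _) (ha _) (by linarith)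
      have h3 : |a (σ n)| ^ p * w n ≤ w n := by
        nlinarith [hw_pos n]
      split_ifs with h
      · linarith [hw_le n]
      · linarith [hK n (not_lt.mp h)]
    refine (Finset.sum_le_sum h1).trans ?_
    rw [Finset.sum_add_distrib, Finset.sum_const, nsmul_eq_mul, mul_comm]
    have h4 : (∑ n ∈ B, if n < K then (1 : ℝ) else 0) ≤ K := by
      rw [Finset.sum_boole]
      have : (B.filter (fun n => n < K)).card ≤ (Finset.range K).card :=
        Finset.card_le_card (fun n hn => by simpa using (Finset.mem_filter.mp hn).2)
      rw [Finset.card_range] at this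
      exact_mod_cast this
    have h5 : (B.card : ℝ) ≤ m := by exact_mod_cast hBc
    nlinarith
  · intro n hn
    have : a (σ n) = 0 := by
      by_contra h
      exact hn (by
        rw [hB, Finset.mem_map]
        exact ⟨σ n, by simpa using h, by simp⟩)
    simp [this, Real.zero_rpow hp0]

lemma tsum_perm_nonneg {p : ℝ} {w : ℕ → ℝ} (hw_pos : ∀ i, 0 < w i) (a : ℕ → ℝ)
    (σ : Equiv.Perm ℕ) : 0 ≤ ∑' n, |a (σ n)| ^ p * w n :=
  tsum_nonneg fun n => mul_nonneg (Real.rpow_nonneg (abs_nonneg _) _) (hw_pos n).le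

lemma lorentzNorm_le {p : ℝ} (hp : 1 ≤ p) {w : ℕ → ℝ} (hw_pos : ∀ i, 0 < w i)
    (hw_le : ∀ i, w i ≤ 1) {ε : ℝ} (hε : 0 ≤ ε) {K : ℕ} (hK : ∀ n, K ≤ n → w n ≤ ε)
    (a : ℕ →₀ ℝ) (ha : ∀ i, |a i| ≤ 1) {m : ℕ} (hm : a.support.card ≤ m) :
    lorentzNorm w p a ≤ (K + ε * m) ^ (1 / p) :=
  ciSup_le fun σ => Real.rpow_le_rpow (tsum_perm_nonneg hw_pos a σ)
    (tsum_perm_le hp hw_pos hw_le hε hK a ha hm σ) (by positivity)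

lemma one_le_lorentzNorm {p : ℝ} (hp : 1 ≤ p) {w : ℕ → ℝ} (hw_pos : ∀ i, 0 < w i)
    (hw_le : ∀ i, w i ≤ 1) (hw_one : w 0 = 1)
    (a : ℕ →₀ ℝ) (ha : ∀ i, |a i| ≤ 1) {j : ℕ} (hj : |a j| = 1) :
    1 ≤ lorentzNorm w p a := by
  have hp0 : p ≠ 0 := by linarith
  -- Without boundedness the supremum would be the junk value `0`.
  have hbdd : BddAbove (Set.range fun σ : Equiv.Perm ℕ =>
      (∑' n : ℕ, |a (σ n)| ^ p * w n) ^ (1 / p)) := by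
    refine ⟨(((0 : ℕ) : ℝ) + 1 * a.support.card) ^ (1 / p), ?_⟩
    rintro _ ⟨σ, rfl⟩
    exact Real.rpow_le_rpow (tsum_perm_nonneg hw_pos a σ)
      (tsum_perm_le hp hw_pos hw_le zero_le_one (fun n _ => hw_le n) a ha le_rfl σ)
      (by positivity)
  refine le_trans ?_ (le_ciSup hbdd (Equiv.swap 0 j))
  refine Real.one_le_rpow ?_ (by positivity)
  have hsum : Summable fun n => |a (Equiv.swap 0 j n)| ^ p * w n := by
    refine summable_of_hasFiniteSupport
      ((a.support.map (Equiv.swap 0 j).symm.toEmbedding).finite_toSet.subset ?_)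
    intro n hn
    rw [Finset.mem_coe, Finset.mem_map]
    refine ⟨Equiv.swap 0 j n, ?_, Equiv.symm_apply_apply _ _⟩
    rw [Finsupp.mem_support_iff]
    intro h
    exact hn (by simp [h, Real.zero_rpow hp0])
  have h0 := hsum.le_tsum 0
    (fun n _ => mul_nonneg (Real.rpow_nonneg (abs_nonneg _) _) (hw_pos n).le)
  simpa [hj, hw_one] using h0

/-! ### Coordinatewise null sequences in an `ℓ_p`-sum -/

section

variable {E : ℕ → Type*} [∀ n, NormedAddCommGroup (E n)] {q : ENNReal}

/-- The projection of an `ℓ_q`-sum onto the coordinates in `s`. -/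
noncomputable def lpProj (s : Finset ℕ) (f : lp E q) : lp E q :=
  ∑ i ∈ s, lp.single q i (f i)

lemma lpProj_add (s : Finset ℕ) (f g : lp E q) :
    lpProj s (f + g) = lpProj s f + lpProj s g := by
  simp [lpProj, Finset.sum_add_distrib]

lemma norm_rpow_eq_lpProj (hq : 0 < q.toReal) (s : Finset ℕ) (f : lp E q) :
    ‖f‖ ^ q.toReal = ‖lpProj s f‖ ^ q.toReal + ‖f - lpProj s f‖ ^ q.toReal := by
  have h1 := lp.norm_sub_norm_compl_sub_single hq f s
  have h2 := lp.norm_sum_single hq (fun i => f i) s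
  unfold lpProj
  linarith

/-- A coordinatewise null sequence is asymptotically disjoint from any fixed vector `x`; any
factor smaller than `1` would do in place of `1 / 2`. -/
lemma eventually_norm_add_rpow_ge [Fact (1 ≤ q)] (hq : 0 < q.toReal) (hq' : q ≠ ⊤) (y : ℕ → lp E q)
    (hy : ∀ n, Tendsto (fun k => y k n) atTop (𝓝 0)) {δ : ℝ} (hδ : 0 < δ)
    (hyδ : ∀ k, δ ≤ ‖y k‖) (x : lp E q) :
    ∀ᶠ k in atTop, ‖x‖ ^ q.toReal + δ ^ q.toReal / 2 ≤ ‖x + y k‖ ^ q.toReal := by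
  set p := q.toReal
  have hcont : Continuous fun t : ℝ =>
      (max (‖x‖ - 2 * t) 0) ^ p + (max (δ - 2 * t) 0) ^ p := by
    refine Continuous.add ?_ ?_ <;>
    exact Continuous.rpow_const (by fun_prop) (fun _ => Or.inr hq.le)
  have hlt : ‖x‖ ^ p + δ ^ p / 2 < (max (‖x‖ - 2 * 0) 0) ^ p + (max (δ - 2 * 0) 0) ^ p := by
    have := Real.rpow_pos_of_pos hδ p
    simp only [mul_zero, sub_zero, max_eq_left (norm_nonneg x), max_eq_left hδ.le]
    linarith
  obtain ⟨ε, hε, hεlt⟩ : ∃ ε > 0,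
      ‖x‖ ^ p + δ ^ p / 2 < (max (‖x‖ - 2 * ε) 0) ^ p + (max (δ - 2 * ε) 0) ^ p := by
    have h1 := (hcont.tendsto 0).eventually (lt_mem_nhds hlt)
    have h2 : ∀ᶠ t in 𝓝[>] (0 : ℝ), ‖x‖ ^ p + δ ^ p / 2 <
      (max (‖x‖ - 2 * t) 0) ^ p + (max (δ - 2 * t) 0) ^ p := h1.filter_mono nhdsWithin_le_nhds
    obtain ⟨t, ht, ht'⟩ := (h2.and self_mem_nhdsWithin).exists
    exact ⟨t, ht', ht⟩
  obtain ⟨s, hs⟩ : ∃ s : Finset ℕ, ‖x - lpProj s x‖ < ε := by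
    have h1 : Tendsto (fun s : Finset ℕ => lpProj s x) atTop (𝓝 x) := lp.hasSum_single hq' x
    obtain ⟨s, hs⟩ := (h1.eventually (Metric.ball_mem_nhds x hε)).exists
    exact ⟨s, by rwa [dist_comm, dist_eq_norm] at hs⟩
  have hPy : Tendsto (fun k => lpProj s (y k)) atTop (𝓝 0) := by
    have h1 : Tendsto (fun k => ∑ i ∈ s, ‖y k i‖) atTop (𝓝 0) := by
      have : Tendsto (fun k => ∑ i ∈ s, ‖y k i‖) atTop (𝓝 (∑ i ∈ s, (0 : ℝ))) :=
        tendsto_finsetSum s fun i _ => tendsto_zero_iff_norm_tendsto_zero.mp (hy i)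
      simpa using this
    refine squeeze_zero_norm (fun k => ?_) h1
    refine (norm_sum_le _ _).trans (Finset.sum_le_sum fun i _ => ?_)
    exact (lp.norm_single (ENNReal.toReal_pos_iff.mp hq).1 _ _).le
  filter_upwards [hPy.eventually (Metric.ball_mem_nhds 0 hε)] with k hk
  rw [dist_zero_right] at hk
  rw [norm_rpow_eq_lpProj hq s (x + y k)]
  refine hεlt.le.trans (add_le_add ?_ ?_)
  · refine Real.rpow_le_rpow (le_max_right _ _) (max_le ?_ (norm_nonneg _)) hq.le
    have h1 : x = lpProj s (x + y k) + (x - lpProj s x) - lpProj s (y k) := by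
      rw [lpProj_add]; abel
    have h2 : ‖x‖ ≤ ‖lpProj s (x + y k)‖ + ‖x - lpProj s x‖ + ‖lpProj s (y k)‖ := by
      conv_lhs => rw [h1]
      exact (norm_sub_le _ _).trans (add_le_add_left (norm_add_le _ _) _)
    linarith
  · refine Real.rpow_le_rpow (le_max_right _ _) (max_le ?_ (norm_nonneg _)) hq.le
    have h1 : y k = (x + y k - lpProj s (x + y k)) - (x - lpProj s x) + lpProj s (y k) := by
      rw [lpProj_add]; abel
    have h2 : ‖y k‖ ≤ ‖x + y k - lpProj s (x + y k)‖ + ‖x - lpProj s x‖ + ‖lpProj s (y k)‖ := by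
      conv_lhs => rw [h1]
      exact (norm_add_le _ _).trans (add_le_add_left (norm_sub_le _ _) _)
    linarith [hyδ k]

/-- A bounded sequence in a sum of finite-dimensional spaces has a coordinatewise convergent
subsequence. -/
lemma exists_subseq_coord_tendsto [∀ n, NormedSpace ℝ (E n)] [∀ n, FiniteDimensional ℝ (E n)]
    (hq : q ≠ 0) (z : ℕ → lp E q) {M : ℝ} (hM : ∀ i, ‖z i‖ ≤ M) :
    ∃ (l : ∀ n, E n) (φ : ℕ → ℕ), StrictMono φ ∧
      ∀ n, Tendsto (fun k => z (φ k) n) atTop (𝓝 (l n)) := by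
  have : ∀ n, ProperSpace (E n) := fun n => FiniteDimensional.proper_real (E n)
  have hc : IsCompact (Set.univ.pi fun n => Metric.closedBall (0 : E n) M) :=
    isCompact_univ_pi fun n => isCompact_closedBall _ _
  obtain ⟨l, -, φ, hφ, hl⟩ := hc.tendsto_subseq (x := fun i => (z i : ∀ n, E n)) (by
    intro i n _
    rw [mem_closedBall_zero_iff]
    exact (lp.norm_apply_le_norm hq (z i) n).trans (hM i))
  exact ⟨l, φ, hφ, fun n => (tendsto_pi_nhds.mp hl) n⟩

end

/-- Let `1 ≤ p < ∞` and `w ∈ 𝒲` (a positive, nonincreasing null weight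
with `w_1 = 1`, not summable; `0`-indexed below).  Let `(E_n)` be any sequence of
finite-dimensional real normed spaces and `E = (⊕_n E_n)_{ℓ_p}`.  Then there do not exist
`C ≥ 1` and a sequence `(z_i)` in `E` such that for every finitely supported real
sequence `(a_i)`:
`C⁻¹ ‖a‖_{d(w,p)} ≤ ‖∑_i a_i z_i‖_E ≤ C ‖a‖_{d(w,p)}`.
In particular, the Lorentz sequence space `d(w,p)` does not embed isomorphically into any
`ℓ_p`-sum of finite-dimensional spaces. -/
theorem stmt_12 (p : ℝ) (hp : 1 ≤ p) [Fact (1 ≤ ENNReal.ofReal p)]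
    (w : ℕ → ℝ) (hw_pos : ∀ i, 0 < w i) (hw_one : w 0 = 1) (hw_anti : Antitone w)
    (hw_null : Filter.Tendsto w Filter.atTop (nhds 0)) (hw_nonsum : ¬ Summable w)
    (E : ℕ → Type*) [∀ n, NormedAddCommGroup (E n)] [∀ n, NormedSpace ℝ (E n)]
    [∀ n, FiniteDimensional ℝ (E n)] :
    ¬ ∃ (C : ℝ) (z : ℕ → lp E (ENNReal.ofReal p)), 1 ≤ C ∧
      ∀ a : ℕ → ℝ, (Function.support a).Finite →
        C⁻¹ * lorentzNorm w p a ≤ ‖∑' i : ℕ, a i • z i‖ ∧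
        ‖∑' i : ℕ, a i • z i‖ ≤ C * lorentzNorm w p a := by
  rintro ⟨C, z, hC, hz⟩
  have hp0 : 0 < p := by linarith
  have hC0 : 0 < C := by linarith
  have hqp : (ENNReal.ofReal p).toReal = p := ENNReal.toReal_ofReal hp0.le
  have hq : 0 < (ENNReal.ofReal p).toReal := by rw [hqp]; exact hp0
  have hw_le : ∀ i, w i ≤ 1 := fun i => hw_one ▸ hw_anti (Nat.zero_le i)
  set T : (ℕ →₀ ℝ) →ₗ[ℝ] lp E (ENNReal.ofReal p) := Finsupp.linearCombination ℝ z with hT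
  have hTa : ∀ a : ℕ →₀ ℝ, ∑' i, a i • z i = T a := by
    intro a
    rw [hT, Finsupp.linearCombination_apply, Finsupp.sum]
    refine tsum_eq_sum fun i hi => ?_
    rw [Finsupp.notMem_support_iff.mp hi, zero_smul]
  have hlow : ∀ a : ℕ →₀ ℝ, C⁻¹ * lorentzNorm w p a ≤ ‖T a‖ := fun a =>
    hTa a ▸ (hz a a.hasFiniteSupport).1
  have hup : ∀ a : ℕ →₀ ℝ, ‖T a‖ ≤ C * lorentzNorm w p a := fun a =>
    hTa a ▸ (hz a a.hasFiniteSupport).2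
  have hTs : ∀ i, T (Finsupp.single i 1) = z i := fun i => by simp [hT]
  have hs1 : ∀ i j : ℕ, |(Finsupp.single i (1 : ℝ)) j| ≤ 1 := by
    intro i j
    rw [Finsupp.single_apply]; split_ifs <;> simp
  have hM : ∀ i, ‖z i‖ ≤ C * (((0 : ℕ) : ℝ) + 1 * (1 : ℕ)) ^ (1 / p) := by
    intro i
    rw [← hTs i]
    refine (hup _).trans (mul_le_mul_of_nonneg_left ?_ hC0.le)
    exact lorentzNorm_le hp hw_pos hw_le zero_le_one (fun n _ => hw_le n) _ (hs1 i)
      (by simp)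
  obtain ⟨l, φ, hφ, hl⟩ := exists_subseq_coord_tendsto
    (ENNReal.toReal_pos_iff.mp hq).1.ne' z hM
  set b : ℕ → ℕ →₀ ℝ := fun k =>
    Finsupp.single (φ (2 * k)) 1 - Finsupp.single (φ (2 * k + 1)) 1 with hb
  have hne : ∀ k, φ (2 * k) ≠ φ (2 * k + 1) := fun k h => by
    have := hφ.injective h; omega
  -- The values of `b k`, and the indices where it vanishes.
  have hb1 : ∀ k, b k (φ (2 * k)) = 1 := fun k => by
    simp [hb, (hne k).symm]
  have hb2 : ∀ k, b k (φ (2 * k + 1)) = -1 := fun k => by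
    simp [hb, hne k]
  have hb3 : ∀ k i, i ≠ φ (2 * k) → i ≠ φ (2 * k + 1) → b k i = 0 := fun k i h1 h2 => by
    simp [hb, h1.symm, h2.symm]
  have hbabs : ∀ k i, |b k i| ≤ 1 := by
    intro k i
    by_cases h1 : i = φ (2 * k)
    · rw [h1, hb1]; simp
    by_cases h2 : i = φ (2 * k + 1)
    · rw [h2, hb2]; simp
    · rw [hb3 k i h1 h2]; simp
  have hyδ : ∀ k, C⁻¹ ≤ ‖T (b k)‖ := by
    intro k
    refine le_trans ?_ (hlow (b k))
    have := one_le_lorentzNorm hp hw_pos hw_le hw_one (b k) (hbabs k) (j := φ (2 * k))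
      (by rw [hb1]; simp)
    exact le_mul_of_one_le_right (by positivity) this
  have hy0 : ∀ n, Tendsto (fun k => (T (b k)) n) atTop (𝓝 0) := by
    intro n
    have h1 : ∀ k, (T (b k)) n = z (φ (2 * k)) n - z (φ (2 * k + 1)) n := by
      intro k
      rw [hb, map_sub, hTs, hTs]; rfl
    simp_rw [h1]
    have t1 : Tendsto (fun k : ℕ => 2 * k) atTop atTop :=
      tendsto_atTop_mono (fun k => by simp only [id]; omega) tendsto_id
    have t2 : Tendsto (fun k : ℕ => 2 * k + 1) atTop atTop :=
      tendsto_atTop_mono (fun k => by simp only [id]; omega) tendsto_id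
    simpa using ((hl n).comp t1).sub ((hl n).comp t2)
  have hind : ∀ N : ℕ, ∃ a : ℕ →₀ ℝ, (∀ i, |a i| ≤ 1) ∧ a.support.card ≤ 2 * N ∧
      N * (C⁻¹ ^ p / 2) ≤ ‖T a‖ ^ p := by
    intro N
    induction N with
    | zero => exact ⟨0, by simp, by simp, by simp [Real.zero_rpow hp0.ne']⟩
    | succ N ih =>
      obtain ⟨a, ha1, ha2, ha3⟩ := ih
      have he := eventually_norm_add_rpow_ge hq ENNReal.ofReal_ne_top (fun k => T (b k)) hy0
        (inv_pos.mpr hC0) hyδ (T a)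
      rw [hqp] at he
      obtain ⟨k, hk, hkS⟩ := (he.and (eventually_gt_atTop (a.support.sup id))).exists
      -- The indices used by `b k` lie beyond the support of `a`.
      have hz0 : ∀ i, k ≤ i → a i = 0 := by
        intro i hi
        by_contra h
        have : i ≤ a.support.sup id :=
          Finset.le_sup (f := id) (Finsupp.mem_support_iff.mpr h)
        omega
      have hk1 : k ≤ φ (2 * k) := le_trans (by omega) (hφ.le_apply (x := 2 * k))
      have hk2 : k ≤ φ (2 * k + 1) := le_trans (by omega) (hφ.le_apply (x := 2 * k + 1))
      refine ⟨a + b k, ?_, ?_, ?_⟩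
      · intro i
        rw [Finsupp.add_apply]
        by_cases hi : k ≤ i
        · rw [hz0 i hi, zero_add]; exact hbabs k i
        · rw [hb3 k i (by omega) (by omega), add_zero]; exact ha1 i
      · have hsub : (a + b k).support ⊆ a.support ∪ {φ (2 * k), φ (2 * k + 1)} := by
          intro i hi
          by_contra h
          simp only [Finset.mem_union, Finsupp.mem_support_iff, Finset.mem_insert,
            Finset.mem_singleton, not_or, not_not] at h
          rw [Finsupp.mem_support_iff, Finsupp.add_apply, h.1, hb3 k i h.2.1 h.2.2] at hi
          simp at hi
        have h1 := Finset.card_le_card hsub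
        have h2 := Finset.card_union_le a.support {φ (2 * k), φ (2 * k + 1)}
        have h3 : ({φ (2 * k), φ (2 * k + 1)} : Finset ℕ).card ≤ 2 := Finset.card_le_two
        omega
      · rw [map_add]
        refine le_trans ?_ hk
        push_cast
        linarith
  -- Compare with the upper estimate, for `ε` making its linear term at most half the lower one.
  set c := C⁻¹ ^ p / 2 with hc
  have hcpos : 0 < c := by positivity
  have hCp : 0 < C ^ p := by positivity
  set ε := c / (4 * C ^ p) with hε
  have hεpos : 0 < ε := by positivity
  obtain ⟨K, hK⟩ := eventually_atTop.mp (hw_null.eventually (gt_mem_nhds hεpos))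
  obtain ⟨N, hN⟩ := exists_nat_gt (2 * (C ^ p * K) / c)
  obtain ⟨a, ha1, ha2, ha3⟩ := hind N
  have h1 : ‖T a‖ ≤ C * (K + ε * (2 * N : ℕ)) ^ (1 / p) :=
    (hup a).trans (mul_le_mul_of_nonneg_left
      (lorentzNorm_le hp hw_pos hw_le hεpos.le (fun n hn => (hK n hn).le) a ha1 ha2) hC0.le)
  have h2 : ‖T a‖ ^ p ≤ C ^ p * (K + ε * (2 * N : ℕ)) := by
    refine (Real.rpow_le_rpow (norm_nonneg _) h1 hp0.le).trans_eq ?_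
    rw [Real.mul_rpow hC0.le (by positivity), ← Real.rpow_mul (by positivity),
      one_div_mul_cancel hp0.ne', Real.rpow_one]
  have h3 : C ^ p * (K + ε * (2 * N : ℕ)) = C ^ p * K + N * c / 2 := by
    rw [hε]; push_cast; field_simp; ring
  rw [div_lt_iff₀ hcpos] at hN
  linarith
end
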